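/- For every integer d ≥ 2 there exists a finite tournament T that is perfectly d-paradoxical, i.e., T is d-dominating, T is d-dominated, no subtournament of T is (d+1)-dominating, and no subtournament of T is (d+1)-dominated. -/

import Mathlib

/-- `E` is a tournament on `V`: loopless, and for all distinct `x,y` exactly one of
`(x,y)`, `(y,x)` is an edge. -/
def IsTournament {V : Type*} (E : V → V → Prop) : Prop :=
  (∀ x : V, ¬ E x x) ∧ ∀ x y : V, x ≠ y → (E x y ↔ ¬ E y x)

/-- The restriction of the digraph `E` to `U` is `d`-dominating: every finite `S ⊆ U`
with `1 ≤ |S| ≤ d` has a common out-neighbor in `U`. -/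
def DomOn {V : Type*} (E : V → V → Prop) (d : ℕ) (U : Set V) : Prop :=
  ∀ S : Finset V, ↑S ⊆ U → S.Nonempty → S.card ≤ d → ∃ w ∈ U, ∀ s ∈ S, E s w

/-- The restriction of the digraph `E` to `U` is `d`-dominated: every finite `S ⊆ U`
with `1 ≤ |S| ≤ d` has a common in-neighbor in `U`. -/
def DomedOn {V : Type*} (E : V → V → Prop) (d : ℕ) (U : Set V) : Prop :=
  ∀ S : Finset V, ↑S ⊆ U → S.Nonempty → S.card ≤ d → ∃ w ∈ U, ∀ s ∈ S, E w s

/-!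
Given a finite `d`-dominating tournament, choose a minimal set among the nonempty vertex sets on
which it is `d`-dominating or `d`-dominated, and let `E` be the tournament induced there, reversed
if necessary so as to be `d`-dominating. If `E` were `(d + 1)`-dominating on some nonempty set `W`,
it would be `d`-dominating on the out-neighborhood in `W` of any `s ∈ W`, which is nonempty and
strictly smaller; likewise with in-neighborhoods. So `E` has neither a `(d + 1)`-dominating nor a
`(d + 1)`-dominated subtournament.

The tournament formed by a reversed copy of `E` followed by a copy of `E`, with all remaining edges
going from the first to the second, inherits this, and it is isomorphic to its own reverse, so it
is `d`-dominated as well as `d`-dominating.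

To have a `d`-dominating tournament to start from, take pairs `(i, A)` with `i` in a large linearly
ordered set and `A` a set of at most `d` indices. Order them by `i`, breaking ties arbitrarily, and
reverse the edge between `(i, A)` and `(j, B)` when `i ∈ B` or `j ∈ A`. A common out-neighbor of `S`
is then `(j, B)`, where `j` is an index not occurring in `S` and `B` consists of the indices of
members of `S` above `j`.
-/

section Tournament

variable {α β : Type*} {r : α → α → Prop} {s : β → β → Prop}

theorem isTournament_iff_asymm_trichotomous :
    IsTournament r ↔ Std.Asymm r ∧ Std.Trichotomous r := by
  refine ⟨fun h ↦ ⟨⟨fun a b hab hba ↦ ?_⟩, ⟨fun a b hab hba ↦ ?_⟩⟩, fun ⟨hasymm, htri⟩ ↦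
    ⟨hasymm.irrefl.irrefl, fun a b hne ↦ ⟨hasymm.asymm a b, fun hba ↦ ?_⟩⟩⟩
  · have hne : a ≠ b := fun heq ↦ h.1 a (heq ▸ hab)
    exact (h.2 a b hne).1 hab hba
  · by_contra hne
    exact hab ((h.2 a b hne).2 hba)
  · by_contra hab
    exact hne (htri.trichotomous a b hab hba)

theorem isTournament_wellOrderingRel (α : Type*) : IsTournament (@WellOrderingRel α) :=
  isTournament_iff_asymm_trichotomous.2 ⟨inferInstance, inferInstance⟩

namespace IsTournament

theorem flip (hr : IsTournament r) : IsTournament (flip r) :=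
  ⟨hr.1, fun a b hne ↦ hr.2 b a hne.symm⟩

theorem of_relEmbedding (f : r ↪r s) (hs : IsTournament s) : IsTournament r := by
  obtain ⟨_, _⟩ := isTournament_iff_asymm_trichotomous.1 hs
  exact isTournament_iff_asymm_trichotomous.2 ⟨f.asymm, f.trichotomous⟩

theorem prodLex (hr : IsTournament r) (hs : IsTournament s) : IsTournament (Prod.Lex r s) := by
  obtain ⟨_, _⟩ := isTournament_iff_asymm_trichotomous.1 hr
  obtain ⟨_, _⟩ := isTournament_iff_asymm_trichotomous.1 hs
  exact isTournament_iff_asymm_trichotomous.2 ⟨inferInstance, inferInstance⟩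

theorem sumLex (hr : IsTournament r) (hs : IsTournament s) : IsTournament (Sum.Lex r s) := by
  obtain ⟨hr_asymm, _⟩ := isTournament_iff_asymm_trichotomous.1 hr
  obtain ⟨hs_asymm, _⟩ := isTournament_iff_asymm_trichotomous.1 hs
  refine isTournament_iff_asymm_trichotomous.2 ⟨⟨?_⟩, inferInstance⟩
  rintro _ _ (⟨hab⟩ | ⟨hab⟩ | _) (⟨hba⟩ | ⟨hba⟩ | _)
  · exact hr_asymm.asymm _ _ hab hba
  · exact hs_asymm.asymm _ _ hab hba

end IsTournament

end Tournament

section Domination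

variable {α β : Type*} {r : α → α → Prop} {s : β → β → Prop} {k : ℕ}

theorem domOn_flip {U : Set α} : DomOn (flip r) k U ↔ DomedOn r k U := Iff.rfl

namespace DomOn

theorem exists_forall_rel {U : Set α} (h : DomOn r k U) (hU : U.Nonempty) {S : Finset α}
    (hSU : ↑S ⊆ U) (hcard : S.card ≤ k) : ∃ w ∈ U, ∀ a ∈ S, r a w := by
  rcases S.eq_empty_or_nonempty with rfl | hS
  · obtain ⟨w, hw⟩ := hU
    exact ⟨w, hw, by simp⟩
  · exact h S hSU hS hcard

theorem image {U : Set α} (h : DomOn r k U) (f : r →r s) : DomOn s k (f '' U) := by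
  classical
  intro S hSU hS hcard
  obtain ⟨T, hTU, hinj, rfl⟩ := Finset.exists_subset_injOn_image_eq_of_surjOn U S hSU
  rw [Finset.card_image_of_injOn hinj] at hcard
  obtain ⟨w, hwU, hw⟩ := h T hTU hS.of_image hcard
  exact ⟨f w, Set.mem_image_of_mem f hwU,
    Finset.forall_mem_image.2 fun a ha ↦ f.map_rel (hw a ha)⟩

theorem preimage {U : Set β} (h : DomOn s k U) (f : r ↪r s)
    (hclosed : ∀ a, f a ∈ U → ∀ w ∈ U, s (f a) w → w ∈ Set.range f) : DomOn r k (f ⁻¹' U) := by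
  intro S hSU hS hcard
  obtain ⟨w, hwU, hw⟩ := h (S.map f.toEmbedding) (by simpa using hSU) (by simpa using hS)
    (by simpa using hcard)
  rw [Finset.forall_mem_map] at hw
  obtain ⟨a, ha⟩ := hS
  obtain ⟨b, rfl⟩ := hclosed a (hSU ha) w hwU (hw a ha)
  exact ⟨b, hwU, fun c hc ↦ f.map_rel_iff.1 (hw c hc)⟩

theorem sumLex [Nonempty β] (h : DomOn s k Set.univ) : DomOn (Sum.Lex r s) k Set.univ := by
  intro S _ _ hcard
  obtain ⟨w, -, hw⟩ := h.exists_forall_rel Set.univ_nonempty (Set.subset_univ _)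
    (S.card_toRight_le.trans hcard)
  refine ⟨.inr w, Set.mem_univ _, ?_⟩
  rintro (a | b) hS
  · exact .sep a w
  · exact .inr (hw b (Finset.mem_toRight.2 hS))

theorem outNeighbors {U : Set α} (h : DomOn r (k + 1) U) {a : α} (ha : a ∈ U) :
    DomOn r k {x ∈ U | r a x} := by
  classical
  intro S hSU _ hcard
  obtain ⟨w, hwU, hw⟩ := h (insert a S)
    (by simpa [Set.insert_subset_iff, ha] using hSU.trans (Set.sep_subset _ _))
    (Finset.insert_nonempty a S) ((Finset.card_insert_le a S).trans (by lia))
  rw [Finset.forall_mem_insert] at hw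
  exact ⟨w, ⟨hwU, hw.1⟩, hw.2⟩

theorem exists_ssubset {U : Set α} (h : DomOn r (k + 1) U) (hU : U.Nonempty)
    (hirrefl : ∀ a, ¬ r a a) : ∃ W ⊂ U, W.Nonempty ∧ DomOn r k W := by
  obtain ⟨a, ha⟩ := hU
  obtain ⟨w, hwU, hw⟩ := h {a} (by simpa using ha) (Finset.singleton_nonempty a) (by simp)
  have hproper : {x ∈ U | r a x} ⊂ U :=
    ⟨Set.sep_subset _ _, fun hsub ↦ hirrefl a (hsub ha).2⟩
  exact ⟨_, hproper, ⟨w, hwU, hw a (Finset.mem_singleton_self a)⟩, h.outNeighbors ha⟩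

end DomOn

/-- The digraph `r` is `k`-domination-free if none of its nonempty induced subdigraphs is
`k`-dominating. The corresponding condition on `k`-dominated subdigraphs is `DomFree (flip r) k`. -/
def DomFree (r : α → α → Prop) (k : ℕ) : Prop :=
  ∀ U : Set α, U.Nonempty → ¬ DomOn r k U

namespace DomFree

theorem of_relHom (h : DomFree s k) (f : r →r s) : DomFree r k :=
  fun _ hU hdom ↦ h _ (hU.image f) (hdom.image f)

theorem sumLex (hr : DomFree r k) (hs : DomFree s k) : DomFree (Sum.Lex r s) k := by
  intro U hU hdom
  rcases (Sum.inr ⁻¹' U).eq_empty_or_nonempty with hempty | hinr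
  · have hleft : U ⊆ Set.range Sum.inl := by
      rwa [← Set.compl_range_inr, Set.subset_compl_iff_disjoint_right,
        ← Set.preimage_eq_empty_iff]
    refine hr (Sum.inl ⁻¹' U) (hU.preimage' hleft) ?_
    exact hdom.preimage (.sumLexInl r s) fun _ _ w hw _ ↦ hleft hw
  · refine hs _ hinr (hdom.preimage (.sumLexInr r s) ?_)
    rintro b - _ - (_ | ⟨_⟩)
    exact Set.mem_range_self _

theorem subrel_of_forall_ssubset {U : Set α} (hirrefl : ∀ a, ¬ r a a)
    (hmin : ∀ W ⊂ U, W.Nonempty → ¬ DomOn r k W) : DomFree (Subrel r (· ∈ U)) (k + 1) := by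
  intro W hW hdom
  obtain ⟨X, hXW, hX, hdomX⟩ :=
    (hdom.image (Subrel.relEmbedding r _).toRelHom).exists_ssubset (hW.image _) hirrefl
  have hWU : Subtype.val '' W ⊆ U := Subtype.coe_image_subset U W
  exact hmin X (hXW.trans_subset hWU) hX hdomX

end DomFree

theorem exists_isTournament_domOn_minimal [Finite α] [Nonempty α] (hr : IsTournament r)
    (hdom : DomOn r k Set.univ) :
    ∃ (E : α → α → Prop) (U : Set α), IsTournament E ∧ U.Nonempty ∧ DomOn E k U ∧
      ∀ W ⊂ U, W.Nonempty → ¬ DomOn E k W ∧ ¬ DomedOn E k W := by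
  obtain ⟨U, hU⟩ := (Set.toFinite {U : Set α | U.Nonempty ∧ (DomOn r k U ∨ DomedOn r k U)})
    |>.exists_minimal ⟨Set.univ, Set.univ_nonempty, .inl hdom⟩
  have hmin : ∀ W ⊂ U, W.Nonempty → ¬ DomOn r k W ∧ ¬ DomedOn r k W := fun W hWU hW ↦
    not_or.1 fun h ↦ hU.not_prop_of_lt hWU ⟨hW, h⟩
  obtain ⟨hne, hdomU | hdomedU⟩ := hU.prop
  · exact ⟨r, U, hr, hne, hdomU, hmin⟩
  · exact ⟨flip r, U, hr.flip, hne, domOn_flip.2 hdomedU, fun W hWU hW ↦ (hmin W hWU hW).symm⟩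

end Domination

section ReverseOn

variable {α : Type*}

/-- The digraph obtained from `r` by reversing the edges between the pairs related by `X`, where
`X` is meant to be symmetric. -/
def reverseOn (X r : α → α → Prop) (a b : α) : Prop :=
  (X a b ∧ r b a) ∨ (¬ X a b ∧ r a b)

theorem IsTournament.reverseOn {X r : α → α → Prop} [Std.Symm X] (hr : IsTournament r) :
    IsTournament (reverseOn X r) := by
  refine ⟨fun a h ↦ ?_, fun a b hne ↦ ?_⟩
  · rcases h with ⟨-, h⟩ | ⟨-, h⟩ <;> exact hr.1 a h
  · have hcomm : X a b ↔ X b a := comm_of X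
    have hrev : r a b ↔ ¬ r b a := hr.2 a b hne
    unfold _root_.reverseOn
    tauto

end ReverseOn

section LabelledPairs

variable {ι : Type*} {d : ℕ}

/-- Two labelled indices `(i, A)` and `(j, B)` are linked if one of the indices belongs to the label
of the other. Labels have at most `d` elements, so that few vertices use up few indices. -/
def Linked (d : ℕ) (u w : ι × {A : Finset ι // A.card ≤ d}) : Prop :=
  u.1 ∈ w.2.1 ∨ w.1 ∈ u.2.1

instance : Std.Symm (Linked (ι := ι) d) := ⟨fun _ _ ↦ Or.symm⟩

theorem exists_fresh_index [Fintype ι] {S : Finset (ι × {A : Finset ι // A.card ≤ d})}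
    (hcard : S.card * (d + 1) < Fintype.card ι) :
    ∃ j, ∀ u ∈ S, u.1 ≠ j ∧ j ∉ u.2.1 := by
  classical
  let used : Finset ι := S.biUnion (fun u ↦ insert u.1 u.2.1)
  have hused : used.card < (Finset.univ : Finset ι).card :=
    calc used.card ≤ S.card * (d + 1) := Finset.card_biUnion_le_card_mul _ _ _ fun u _ ↦
          (Finset.card_insert_le _ _).trans (Nat.succ_le_succ u.2.2)
      _ < (Finset.univ : Finset ι).card := hcard
  obtain ⟨j, -, hj⟩ := Finset.exists_mem_notMem_of_card_lt_card hused
  refine ⟨j, fun u hu ↦ ?_⟩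
  have hju : j ∉ insert u.1 u.2.1 := fun h ↦ hj (Finset.mem_biUnion.2 ⟨u, hu, h⟩)
  rw [Finset.mem_insert, not_or] at hju
  exact ⟨Ne.symm hju.1, hju.2⟩

theorem domOn_reverseOn_linked [Fintype ι] (hcard : d * (d + 1) < Fintype.card ι)
    {r : ι → ι → Prop} (hr : IsTournament r)
    (s : {A : Finset ι // A.card ≤ d} → {A : Finset ι // A.card ≤ d} → Prop) :
    DomOn (reverseOn (Linked d) (Prod.Lex r s)) d Set.univ := by
  classical
  intro S _ _ hS
  obtain ⟨j, hfresh⟩ := exists_fresh_index ((Nat.mul_le_mul_right _ hS).trans_lt hcard)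
  let B : Finset ι := {i ∈ S.image Prod.fst | r j i}
  have hB : B.card ≤ d := (Finset.card_filter_le _ _).trans (Finset.card_image_le.trans hS)
  refine ⟨(j, ⟨B, hB⟩), Set.mem_univ _, fun u hu ↦ ?_⟩
  obtain ⟨hne, hnotMem⟩ := hfresh u hu
  have hlinked : Linked d u (j, ⟨B, hB⟩) ↔ r j u.1 := by
    have hmem : u.1 ∈ B ↔ r j u.1 := by
      simpa [B] using fun _ ↦ ⟨u.2.1, u.2.2, hu⟩
    simp [Linked, hmem, hnotMem]
  by_cases hju : r j u.1
  · exact .inl ⟨hlinked.2 hju, .left _ _ hju⟩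
  · exact .inr ⟨mt hlinked.1 hju, .left _ _ ((hr.2 u.1 j hne).2 hju)⟩

end LabelledPairs

theorem exists_isTournament_domOn (d : ℕ) :
    ∃ (V : Type) (_ : Fintype V) (_ : Nonempty V) (E : V → V → Prop),
      IsTournament E ∧ DomOn E d Set.univ := by
  let ι := Fin (d * (d + 1) + 1)
  refine ⟨ι × {A : Finset ι // A.card ≤ d}, inferInstance, ⟨(0, ⟨∅, by simp⟩)⟩,
    reverseOn (Linked d) (Prod.Lex WellOrderingRel WellOrderingRel), ?_, ?_⟩
  · exact ((isTournament_wellOrderingRel _).prodLex (isTournament_wellOrderingRel _)).reverseOn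
  · exact domOn_reverseOn_linked (by simp [ι]) (isTournament_wellOrderingRel _) _

theorem exists_isTournament_domOn_domFree (d : ℕ) :
    ∃ (V : Type) (_ : Fintype V) (_ : Nonempty V) (E : V → V → Prop), IsTournament E ∧
      DomOn E d Set.univ ∧ DomFree E (d + 1) ∧ DomFree (flip E) (d + 1) := by
  classical
  obtain ⟨V, _, _, _, hr, hdom⟩ := exists_isTournament_domOn d
  obtain ⟨E, U, hE, hU, hdomU, hmin⟩ := exists_isTournament_domOn_minimal hr hdom
  have hdomSub : DomOn (Subrel E (· ∈ U)) d Set.univ := by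
    rw [← Subtype.coe_preimage_self U]
    exact hdomU.preimage (Subrel.relEmbedding E _) fun _ _ w hw _ ↦ ⟨⟨w, hw⟩, rfl⟩
  exact ⟨U, inferInstance, hU.to_subtype, Subrel E (· ∈ U),
    hE.of_relEmbedding (Subrel.relEmbedding E _), hdomSub,
    .subrel_of_forall_ssubset hE.1 fun W hWU hW ↦ (hmin W hWU hW).1,
    .subrel_of_forall_ssubset (r := flip E) hE.1 fun W hWU hW ↦ (hmin W hWU hW).2⟩

/-- The isomorphism `Sum.swap` from the reverse of `Sum.Lex r s` to the sum of the reverses in the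
opposite order. It makes `Sum.Lex (flip r) r` isomorphic to its own reverse. -/
def flipSumLexIso {α β : Type*} (r : α → α → Prop) (s : β → β → Prop) :
    flip (Sum.Lex r s) ≃r Sum.Lex (flip s) (flip r) where
  toEquiv := Equiv.sumComm α β
  map_rel_iff' := by rintro (a | a) (b | b) <;> simp [flip]

/-- Example (Bukh): for every `d ≥ 2` there exists a finite perfectly `d`-paradoxical
tournament: `d`-dominating, `d`-dominated, with no `(d+1)`-dominating subtournament
and no `(d+1)`-dominated subtournament. -/
theorem perfectly_paradoxical_exists (d : ℕ) (hd : 2 ≤ d) :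
    ∃ (V : Type) (_ : Fintype V) (_ : Nonempty V) (E : V → V → Prop),
      IsTournament E ∧
      DomOn E d (Set.univ : Set V) ∧
      DomedOn E d (Set.univ : Set V) ∧
      (∀ U : Set V, U.Nonempty → ¬ DomOn E (d + 1) U) ∧
      (∀ U : Set V, U.Nonempty → ¬ DomedOn E (d + 1) U) := by
  obtain ⟨V, _, _, E, hE, hdom, hfree, hfree_flip⟩ := exists_isTournament_domOn_domFree d
  have hT : DomOn (Sum.Lex (flip E) E) d Set.univ := hdom.sumLex
  have hT_free : DomFree (Sum.Lex (flip E) E) (d + 1) := hfree_flip.sumLex hfree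
  let selfDual : flip (Sum.Lex (flip E) E) ≃r Sum.Lex (flip E) E := flipSumLexIso (flip E) E
  have hT_domed : DomedOn (Sum.Lex (flip E) E) d Set.univ := by
    rw [← domOn_flip, ← Set.image_univ_of_surjective selfDual.symm.surjective]
    exact hT.image selfDual.symm.toRelEmbedding.toRelHom
  exact ⟨V ⊕ V, inferInstance, inferInstance, Sum.Lex (flip E) E, hE.flip.sumLex hE, hT, hT_domed,
    hT_free, hT_free.of_relHom selfDual.toRelEmbedding.toRelHom⟩
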